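/- For every n ≥ 2 and all 1 ≤ p < q ≤ n, the boundary set ∂_{p,q} is exactly the set of triangulations in the oriented class Θ_{T_p} that contain the triangle with vertices {p, q, n+1}, and the subgraph of K_n induced by ∂_{p,q} is isomorphic to the Cartesian product K_{p−1} □ Θ', where Θ' is the oriented class, inside the flip graph K_{n−p} of the convex (n−p+2)-gon with vertices p, p+1, …, n+1 and special side {p, n+1}, consisting of the triangulations of that smaller polygon containing the triangle {p, q, n+1}. In particular ∂_{p,q} induces a product K_l □ (an oriented class of K_r) with l + r = n − 1. -/

import Mathlib

open Finset
open scoped Fin.NatCast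

/-- `x` lies strictly between `a` and `b` in cyclic (counterclockwise) order
on the vertices `0, 1, …, m-1` of a convex `m`-gon. -/
def CycBtw {m : ℕ} (a b x : Fin m) : Prop :=
  0 < (x - a).val ∧ (x - a).val < (b - a).val

/-- `a` and `b` are adjacent (cyclically consecutive) vertices of the convex `m`-gon. -/
def PolyAdj {m : ℕ} (a b : Fin m) : Prop :=
  (b - a).val = 1 ∨ (a - b).val = 1

/-- `e` is a side of the convex `m`-gon. -/
def IsSide {m : ℕ} (e : Sym2 (Fin m)) : Prop :=
  ∃ a b : Fin m, e = s(a, b) ∧ PolyAdj a b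

/-- `e` is a diagonal of the convex `m`-gon: a pair of distinct non-adjacent vertices. -/
def IsDiagonal {m : ℕ} (e : Sym2 (Fin m)) : Prop :=
  ¬ e.IsDiag ∧ ∀ a b : Fin m, e = s(a, b) → ¬ PolyAdj a b

/-- Two chords cross iff exactly one endpoint of one lies strictly between the
endpoints of the other (for every representation of the endpoints). -/
def Crosses {m : ℕ} (e f : Sym2 (Fin m)) : Prop :=
  ∀ a b : Fin m, e = s(a, b) →
    ∃ c d : Fin m, f = s(c, d) ∧ Xor' (CycBtw a b c) (CycBtw a b d)

/-- A triangulation of the convex `(n+2)`-gon: a maximal set of pairwise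
non-crossing diagonals. -/
def IsTriangulation (n : ℕ) (t : Finset (Sym2 (Fin (n + 2)))) : Prop :=
  (∀ e ∈ t, IsDiagonal e) ∧
  (∀ e ∈ t, ∀ f ∈ t, ¬ Crosses e f) ∧
  (∀ e, IsDiagonal e → (∀ f ∈ t, ¬ Crosses e f) → e ∈ t)

/-- The type of triangulations of the convex `(n+2)`-gon. -/
def Triangulation (n : ℕ) : Type :=
  {t : Finset (Sym2 (Fin (n + 2))) // IsTriangulation n t}

instance (n : ℕ) : DecidableEq (Triangulation n) := fun a b =>
  decidable_of_iff (a.val = b.val) Subtype.ext_iff.symm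

noncomputable instance (n : ℕ) : Fintype (Triangulation n) := by
  classical exact Subtype.fintype _

/-- The associahedron graph `K_n`: vertices are the triangulations of the convex
`(n+2)`-gon, with an edge between two triangulations iff they differ in exactly
one diagonal (a flip). -/
def assocGraph (n : ℕ) : SimpleGraph (Triangulation n) where
  Adj s t := (s.val \ t.val).card = 1 ∧ (t.val \ s.val).card = 1
  symm := ⟨fun s t h => ⟨h.2, h.1⟩⟩
  loopless := ⟨fun s h => by simp at h⟩

/-- The set of edges of `G` with exactly one endpoint in `S`. -/
def edgeBoundary {V : Type*} (G : SimpleGraph V) (S : Set V) : Set (Sym2 V) :=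
  {e | e ∈ G.edgeSet ∧ ∃ u v : V, e = s(u, v) ∧ u ∈ S ∧ v ∉ S}

/-- `e` is an edge of the triangulation `t`: a side of the polygon or one of the
diagonals of `t`. -/
def EdgeOfT {n : ℕ} (t : Triangulation n) (e : Sym2 (Fin (n + 2))) : Prop :=
  IsSide e ∨ e ∈ t.val

/-- The triangle with vertices `a`, `b`, `c` is one of the `n` triangles of the
triangulation `t` (for pairwise non-crossing sets of diagonals this holds exactly
when all three chords are edges of `t`). -/
def IsTriangleOf {n : ℕ} (t : Triangulation n) (a b c : Fin (n + 2)) : Prop :=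
  a ≠ b ∧ b ≠ c ∧ a ≠ c ∧ EdgeOfT t s(a, b) ∧ EdgeOfT t s(b, c) ∧ EdgeOfT t s(a, c)

/-- The oriented class `Θ_{T_p}` (w.r.t. the special side `e* = {0, n+1}`): the set of
triangulations of the convex `(n+2)`-gon having the triangle `T_p = {0, p, n+1}` as one of
their triangles. -/
def orientedClass (n p : ℕ) : Set (Triangulation n) :=
  {t | IsTriangleOf t (0 : Fin (n + 2)) ((p : ℕ) : Fin (n + 2)) (((n + 1 : ℕ)) : Fin (n + 2))}

/-- The set `E_{p,q}` of edges of `K_n` with one endpoint in `Θ_{T_p}` and the other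
in `Θ_{T_q}`. -/
def edgesBetween (n p q : ℕ) : Set (Sym2 (Triangulation n)) :=
  {e | e ∈ (assocGraph n).edgeSet ∧
    ∃ u v : Triangulation n, e = s(u, v) ∧ u ∈ orientedClass n p ∧ v ∈ orientedClass n q}

/-- The boundary set `∂_{p,q}`: triangulations in `Θ_{T_p}` having a neighbor in
`Θ_{T_q}`. -/
def boundarySet (n p q : ℕ) : Set (Triangulation n) :=
  {t | t ∈ orientedClass n p ∧
    ∃ t' : Triangulation n, t' ∈ orientedClass n q ∧ (assocGraph n).Adj t t'}

namespace AssocAux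

/-- Sorted pair of values. -/
def key {m : ℕ} (e : Sym2 (Fin m)) : ℕ × ℕ := (e.inf.val, e.sup.val)

lemma key_mk {m : ℕ} (a b : Fin m) (h : a ≤ b) : key s(a, b) = (a.val, b.val) := by
  simp [key, h]

lemma sorted_rep {m : ℕ} (e : Sym2 (Fin m)) : ∃ a b : Fin m, a ≤ b ∧ e = s(a, b) := by
  induction e using Sym2.ind with
  | _ a b =>
    rcases le_total a b with h | h
    · exact ⟨a, b, h, rfl⟩
    · exact ⟨b, a, h, Sym2.eq_swap⟩

lemma key_inj {m : ℕ} : Function.Injective (key (m := m)) := by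
  intro e f h
  obtain ⟨a, b, hab, rfl⟩ := sorted_rep e
  obtain ⟨c, d, hcd, rfl⟩ := sorted_rep f
  rw [key_mk _ _ hab, key_mk _ _ hcd] at h
  simp only [Prod.mk.injEq] at h
  rw [Fin.ext h.1, Fin.ext h.2]

/-- diagonal of the (n+2)-gon as a sorted pair -/
def Dg (n : ℕ) (x : ℕ × ℕ) : Prop := x.1 + 1 < x.2 ∧ x.2 ≤ n + 1 ∧ ¬ (x.1 = 0 ∧ x.2 = n + 1)

def Cr (x y : ℕ × ℕ) : Prop :=
  (x.1 < y.1 ∧ y.1 < x.2 ∧ x.2 < y.2) ∨ (y.1 < x.1 ∧ x.1 < y.2 ∧ y.2 < x.2)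

lemma sub_val {m : ℕ} (a b : Fin m) :
    (a - b).val = if b.val ≤ a.val then a.val - b.val else m + a.val - b.val := by
  rw [Fin.sub_def]
  have ha := a.isLt
  have hb := b.isLt
  split_ifs with h
  · simp only
    have : m - b.val + a.val = m + (a.val - b.val) := by omega
    rw [this, Nat.add_mod_left, Nat.mod_eq_of_lt (by omega)]
  · simp only
    rw [Nat.mod_eq_of_lt (by omega)]
    omega

lemma polyAdj_iff {n : ℕ} (a b : Fin (n + 2)) (h : a < b) :
    PolyAdj a b ↔ b.val = a.val + 1 ∨ (a.val = 0 ∧ b.val = n + 1) := by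
  have ha := a.isLt
  have hb := b.isLt
  rw [Fin.lt_def] at h
  unfold PolyAdj
  rw [sub_val, sub_val, if_pos h.le, if_neg (by omega)]
  omega

lemma polyAdj_symm {m : ℕ} (a b : Fin m) : PolyAdj a b ↔ PolyAdj b a := by
  unfold PolyAdj; exact or_comm

lemma isSide_iff {n : ℕ} (a b : Fin (n + 2)) (h : a < b) :
    IsSide s(a, b) ↔ b.val = a.val + 1 ∨ (a.val = 0 ∧ b.val = n + 1) := by
  rw [← polyAdj_iff a b h]
  constructor
  · rintro ⟨c, d, he, hcd⟩
    rw [Sym2.eq_iff] at he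
    rcases he with ⟨rfl, rfl⟩ | ⟨rfl, rfl⟩
    · exact hcd
    · exact (polyAdj_symm _ _).1 hcd
  · intro hh
    exact ⟨a, b, rfl, hh⟩

lemma isDiagonal_iff {n : ℕ} (e : Sym2 (Fin (n + 2))) : IsDiagonal e ↔ Dg n (key e) := by
  obtain ⟨a, b, hab, rfl⟩ := sorted_rep e
  rw [key_mk _ _ hab]
  have hb := b.isLt
  rcases hab.eq_or_lt with rfl | h
  · simp [IsDiagonal, Dg]
  · have h1 : IsDiagonal s(a, b) ↔ ¬ PolyAdj a b := by
      constructor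
      · intro hh
        exact hh.2 a b rfl
      · intro hh
        refine ⟨by simpa using h.ne, ?_⟩
        intro c d he
        rw [Sym2.eq_iff] at he
        rcases he with ⟨rfl, rfl⟩ | ⟨rfl, rfl⟩
        · exact hh
        · rwa [polyAdj_symm]
    rw [h1, polyAdj_iff a b h]
    rw [Fin.lt_def] at h
    simp only [Dg]
    omega

lemma cycBtw_lt {m : ℕ} (a b x : Fin m) (h : a < b) :
    CycBtw a b x ↔ a.val < x.val ∧ x.val < b.val := by
  have ha := a.isLt
  have hb := b.isLt
  have hx := x.isLt
  rw [Fin.lt_def] at h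
  unfold CycBtw
  rw [sub_val, sub_val, if_pos h.le]
  split_ifs <;> omega

lemma cycBtw_gt {m : ℕ} (a b x : Fin m) (h : a < b) :
    CycBtw b a x ↔ b.val < x.val ∨ x.val < a.val := by
  have ha := a.isLt
  have hb := b.isLt
  have hx := x.isLt
  rw [Fin.lt_def] at h
  unfold CycBtw
  rw [sub_val, sub_val, if_neg (by omega : ¬ b.val ≤ a.val)]
  split_ifs <;> omega

lemma crosses_iff {m : ℕ} (e f : Sym2 (Fin m)) (he : (key e).1 < (key e).2)
    (hf : (key f).1 < (key f).2) : Crosses e f ↔ Cr (key e) (key f) := by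
  obtain ⟨a, b, hab, rfl⟩ := sorted_rep e
  obtain ⟨c, d, hcd, rfl⟩ := sorted_rep f
  rw [key_mk _ _ hab] at *
  rw [key_mk _ _ hcd] at *
  have hab' : a < b := Fin.lt_def.2 he
  have hcd' : c < d := Fin.lt_def.2 hf
  simp only at he hf
  constructor
  · intro h
    have key1 : ∀ a' b', s(a, b) = s(a', b') → Xor' (CycBtw a' b' c) (CycBtw a' b' d) := by
      intro a' b' hh
      obtain ⟨c', d', hc, hx⟩ := h a' b' hh
      rw [Sym2.eq_iff] at hc
      rcases hc with ⟨rfl, rfl⟩ | ⟨rfl, rfl⟩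
      · exact hx
      · unfold Xor' Xor at *
        tauto
    have h1 := key1 a b rfl
    have h2 := key1 b a Sym2.eq_swap
    rw [cycBtw_lt _ _ _ hab', cycBtw_lt _ _ _ hab'] at h1
    rw [cycBtw_gt _ _ _ hab', cycBtw_gt _ _ _ hab'] at h2
    unfold Xor' Xor at h1 h2
    simp only [Cr]
    omega
  · intro h a' b' hh
    refine ⟨c, d, rfl, ?_⟩
    simp only [Cr] at h
    rw [Sym2.eq_iff] at hh
    rcases hh with ⟨rfl, rfl⟩ | ⟨rfl, rfl⟩
    · rw [cycBtw_lt _ _ _ hab', cycBtw_lt _ _ _ hab']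
      unfold Xor' Xor
      omega
    · rw [cycBtw_gt _ _ _ hab', cycBtw_gt _ _ _ hab']
      unfold Xor' Xor
      omega

/-- Triangulations as sets of sorted pairs of naturals. -/
def NT (n : ℕ) (S : Finset (ℕ × ℕ)) : Prop :=
  (∀ x ∈ S, Dg n x) ∧ (∀ x ∈ S, ∀ y ∈ S, ¬ Cr x y) ∧
  (∀ x, Dg n x → (∀ y ∈ S, ¬ Cr x y) → x ∈ S)

def N {m : ℕ} (t : Finset (Sym2 (Fin m))) : Finset (ℕ × ℕ) := t.image key

lemma key_mem_N {m : ℕ} (t : Finset (Sym2 (Fin m))) (e : Sym2 (Fin m)) :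
    key e ∈ N t ↔ e ∈ t := by
  unfold N
  rw [Finset.mem_image]
  constructor
  · rintro ⟨f, hf, h⟩
    rwa [← key_inj h]
  · intro h
    exact ⟨e, h, rfl⟩

lemma exists_key {n : ℕ} (x : ℕ × ℕ) (h : Dg n x) : ∃ e : Sym2 (Fin (n + 2)), key e = x := by
  obtain ⟨a, b⟩ := x
  simp only [Dg] at h
  refine ⟨s(⟨a, by omega⟩, ⟨b, by omega⟩), ?_⟩
  rw [key_mk]
  rw [Fin.le_def]
  simp only
  omega

lemma Dg.lt {n : ℕ} {x : ℕ × ℕ} (h : Dg n x) : x.1 < x.2 := by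
  unfold Dg at h; omega

lemma isTri_iff {n : ℕ} (t : Finset (Sym2 (Fin (n + 2)))) :
    IsTriangulation n t ↔ NT n (N t) := by
  constructor
  · rintro ⟨h1, h2, h3⟩
    have h1' : ∀ e ∈ t, Dg n (key e) := fun e he => (isDiagonal_iff e).1 (h1 e he)
    refine ⟨?_, ?_, ?_⟩
    · intro x hx
      obtain ⟨e, he, rfl⟩ := Finset.mem_image.1 hx
      exact h1' e he
    · intro x hx y hy
      obtain ⟨e, he, rfl⟩ := Finset.mem_image.1 hx
      obtain ⟨f, hf, rfl⟩ := Finset.mem_image.1 hy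
      rw [← crosses_iff e f (h1' e he).lt (h1' f hf).lt]
      exact h2 e he f hf
    · intro x hx hy
      obtain ⟨e, rfl⟩ := exists_key x hx
      rw [key_mem_N]
      refine h3 e ((isDiagonal_iff e).2 hx) ?_
      intro f hf
      rw [crosses_iff e f hx.lt (h1' f hf).lt]
      exact hy _ ((key_mem_N t f).2 hf)
  · rintro ⟨h1, h2, h3⟩
    have h1' : ∀ e ∈ t, Dg n (key e) := fun e he => h1 _ ((key_mem_N t e).2 he)
    refine ⟨?_, ?_, ?_⟩
    · intro e he
      exact (isDiagonal_iff e).2 (h1' e he)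
    · intro e he f hf
      rw [crosses_iff e f (h1' e he).lt (h1' f hf).lt]
      exact h2 _ ((key_mem_N t e).2 he) _ ((key_mem_N t f).2 hf)
    · intro e he hf
      rw [isDiagonal_iff] at he
      rw [← key_mem_N]
      refine h3 _ he ?_
      intro y hy
      obtain ⟨f, hf', rfl⟩ := Finset.mem_image.1 hy
      rw [← crosses_iff e f he.lt (h1' f hf').lt]
      exact hf f hf'

lemma N_inj {m : ℕ} : Function.Injective (N (m := m)) := Finset.image_injective key_inj

lemma NT_N {n : ℕ} (t : Triangulation n) : NT n (N t.val) := (isTri_iff _).1 t.2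

lemma exists_tri {n : ℕ} (S : Finset (ℕ × ℕ)) (h : NT n S) :
    ∃ t : Triangulation n, N t.val = S := by
  classical
  have hN : N ((Finset.univ : Finset (Sym2 (Fin (n + 2)))).filter (fun e => key e ∈ S)) = S := by
    ext x
    constructor
    · intro hx
      obtain ⟨e, he, rfl⟩ := Finset.mem_image.1 hx
      exact (Finset.mem_filter.1 he).2
    · intro hx
      obtain ⟨e, rfl⟩ := exists_key x (h.1 x hx)
      rw [key_mem_N]
      simpa using hx
  exact ⟨⟨_, (isTri_iff _).2 (hN.symm ▸ h)⟩, hN⟩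

noncomputable def mkTri {n : ℕ} (S : Finset (ℕ × ℕ)) (h : NT n S) : Triangulation n :=
  (exists_tri S h).choose

lemma N_mkTri {n : ℕ} (S : Finset (ℕ × ℕ)) (h : NT n S) : N (mkTri S h).val = S :=
  (exists_tri S h).choose_spec

lemma tri_ext {n : ℕ} {s t : Triangulation n} (h : N s.val = N t.val) : s = t :=
  Subtype.ext (N_inj h)

lemma card_sdiff_N {m : ℕ} (s t : Finset (Sym2 (Fin m))) :
    (N s \ N t).card = (s \ t).card := by
  unfold N
  rw [← Finset.image_sdiff _ _ key_inj, Finset.card_image_of_injective _ key_inj]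

lemma adj_iff {n : ℕ} (s t : Triangulation n) : (assocGraph n).Adj s t ↔
    (N s.val \ N t.val).card = 1 ∧ (N t.val \ N s.val).card = 1 := by
  rw [card_sdiff_N, card_sdiff_N]
  rfl

/-- edges -/
def E (n : ℕ) (S : Finset (ℕ × ℕ)) (a b : ℕ) : Prop :=
  b = a + 1 ∨ (a = 0 ∧ b = n + 1) ∨ (a, b) ∈ S

lemma cast_val {n a : ℕ} (h : a < n + 2) : ((a : ℕ) : Fin (n + 2)).val = a := by
  simp [Nat.mod_eq_of_lt h]

lemma edge_iff {n : ℕ} (t : Triangulation n) (a b : ℕ) (h : a < b) (hb : b ≤ n + 1) :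
    EdgeOfT t s(((a : ℕ) : Fin (n + 2)), ((b : ℕ) : Fin (n + 2))) ↔ E n (N t.val) a b := by
  have h1 := cast_val (n := n) (a := a) (by omega)
  have h2 := cast_val (n := n) (a := b) (by omega)
  have hlt : ((a : ℕ) : Fin (n + 2)) < ((b : ℕ) : Fin (n + 2)) := by
    rw [Fin.lt_def, h1, h2]; exact h
  unfold EdgeOfT E
  rw [isSide_iff _ _ hlt, ← key_mem_N, key_mk _ _ hlt.le, h1, h2, or_assoc]

lemma triangle_iff {n : ℕ} (t : Triangulation n) (a b c : ℕ) (h : a < b) (hbc : b < c)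
    (hc : c ≤ n + 1) :
    IsTriangleOf t ((a : ℕ) : Fin (n + 2)) ((b : ℕ) : Fin (n + 2)) ((c : ℕ) : Fin (n + 2)) ↔
      E n (N t.val) a b ∧ E n (N t.val) b c ∧ E n (N t.val) a c := by
  have h1 := cast_val (n := n) (a := a) (by omega)
  have h2 := cast_val (n := n) (a := b) (by omega)
  have h3 := cast_val (n := n) (a := c) (by omega)
  unfold IsTriangleOf
  rw [edge_iff _ _ _ h (by omega), edge_iff _ _ _ hbc (by omega), edge_iff _ _ _ (h.trans hbc) hc]
  simp only [ne_eq, Fin.ext_iff, h1, h2, h3]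
  have : a ≠ b := by omega
  have : b ≠ c := by omega
  have : a ≠ c := by omega
  tauto

lemma class_iff {n p : ℕ} (t : Triangulation n) (hp : 1 ≤ p) (hpn : p ≤ n) :
    t ∈ orientedClass n p ↔ E n (N t.val) 0 p ∧ E n (N t.val) p (n + 1) := by
  have := triangle_iff t 0 p (n + 1) (by omega) (by omega) le_rfl
  have h0 : E n (N t.val) 0 (n + 1) := Or.inr (Or.inl ⟨rfl, rfl⟩)
  have h1 : ((0 : ℕ) : Fin (n + 2)) = 0 := by simp
  rw [h1] at this
  unfold orientedClass
  rw [Set.mem_setOf_eq, this]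
  tauto

/-- an edge does not cross a diagonal of the triangulation -/
lemma E.nc {n : ℕ} {S : Finset (ℕ × ℕ)} (hS : NT n S) {a b : ℕ} (h : E n S a b)
    {c d : ℕ} (hcd : (c, d) ∈ S) : ¬ Cr (a, b) (c, d) := by
  have hd := hS.1 _ hcd
  rcases h with h | h | h
  · simp only [Cr, Dg] at *; omega
  · simp only [Cr, Dg] at *; omega
  · exact hS.2.1 _ h _ hcd

lemma E.mem {n : ℕ} {S : Finset (ℕ × ℕ)} {a b : ℕ} (h : E n S a b) (hd : Dg n (a, b)) :
    (a, b) ∈ S := by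
  rcases h with h | h | h
  · simp only [Dg] at hd; omega
  · simp only [Dg] at hd; omega
  · exact h

/-! ### Part one -/

lemma part1_fwd {n p q : ℕ} (hp : 1 ≤ p) (hpq : p < q) (hqn : q ≤ n)
    {S S' : Finset (ℕ × ℕ)} (hS : NT n S) (hS' : NT n S')
    (h1 : E n S 0 p) (h2 : E n S p (n + 1)) (h3 : E n S' 0 q) (h4 : E n S' q (n + 1))
    (c1 : (S \ S').card = 1) (c2 : (S' \ S).card = 1) :
    E n S p q ∧ E n S q (n + 1) := by
  have m1 : (p, n + 1) ∈ S := h2.mem (by simp only [Dg]; omega)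
  have m2 : (0, q) ∈ S' := h3.mem (by simp only [Dg]; omega)
  have m1' : (p, n + 1) ∉ S' := by
    intro h
    have := hS'.2.1 _ m2 _ h
    simp only [Cr] at this
    omega
  have m2' : (0, q) ∉ S := by
    intro h
    have := hS.2.1 _ m1 _ h
    simp only [Cr] at this
    omega
  obtain ⟨x, hx⟩ := Finset.card_eq_one.1 c1
  obtain ⟨y, hy⟩ := Finset.card_eq_one.1 c2
  have e1 : (p, n + 1) = x := by
    rw [← Finset.mem_singleton, ← hx]; exact Finset.mem_sdiff.2 ⟨m1, m1'⟩
  have e2 : (0, q) = y := by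
    rw [← Finset.mem_singleton, ← hy]; exact Finset.mem_sdiff.2 ⟨m2, m2'⟩
  have d1 : ∀ z ∈ S, z ≠ (p, n + 1) → z ∈ S' := by
    intro z hz hne
    by_contra hc
    apply hne
    rw [e1, ← Finset.mem_singleton, ← hx]; exact Finset.mem_sdiff.2 ⟨hz, hc⟩
  have d2 : ∀ z ∈ S', z ≠ (0, q) → z ∈ S := by
    intro z hz hne
    by_contra hc
    apply hne
    rw [e2, ← Finset.mem_singleton, ← hy]; exact Finset.mem_sdiff.2 ⟨hz, hc⟩
  constructor
  · by_cases hs : q = p + 1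
    · exact Or.inl hs
    · refine Or.inr (Or.inr (hS.2.2 _ (by simp only [Dg]; omega) ?_))
      rintro ⟨c, d⟩ hcd hcr
      have hd := hS.1 _ hcd
      have n1 := E.nc hS h2 hcd
      by_cases he : (c, d) = (p, n + 1)
      · simp only [Prod.mk.injEq] at he
        simp only [Cr] at hcr
        omega
      · have n2 := E.nc hS' h3 (d1 _ hcd he)
        simp only [Cr, Dg] at *
        omega
  · rcases h4 with h | h | h
    · exact Or.inl h
    · exact Or.inr (Or.inl h)
    · refine Or.inr (Or.inr (d2 _ h ?_))
      simp only [ne_eq, Prod.mk.injEq]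
      omega

lemma part1_bwd {n p q : ℕ} (hp : 1 ≤ p) (hpq : p < q) (hqn : q ≤ n)
    {S : Finset (ℕ × ℕ)} (hS : NT n S)
    (h1 : E n S 0 p) (h2 : E n S p (n + 1)) (h3 : E n S p q) (h4 : E n S q (n + 1)) :
    ∃ S', NT n S' ∧ E n S' 0 q ∧ E n S' q (n + 1) ∧ (S \ S').card = 1 ∧ (S' \ S).card = 1 := by
  have m1 : (p, n + 1) ∈ S := h2.mem (by simp only [Dg]; omega)
  have m2' : (0, q) ∉ S := by
    intro h
    have := hS.2.1 _ m1 _ h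
    simp only [Cr] at this
    omega
  have hne : (0, q) ≠ (p, n + 1) := by simp only [ne_eq, Prod.mk.injEq]; omega
  have nc0 : ∀ c d, (c, d) ∈ S → (c, d) ≠ (p, n + 1) → ¬ Cr (0, q) (c, d) := by
    intro c d hcd hne
    have a1 := E.nc hS h1 hcd
    have a2 := E.nc hS h2 hcd
    have a3 := E.nc hS h3 hcd
    have a4 := E.nc hS h4 hcd
    have hd := hS.1 _ hcd
    simp only [ne_eq, Prod.mk.injEq] at hne
    simp only [Cr, Dg] at *
    omega
  have hEe : ∀ S' : Finset (ℕ × ℕ), S.erase (p, n + 1) ⊆ S' → ∀ a b, E n S a b →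
      (a, b) ≠ (p, n + 1) → E n S' a b := by
    intro S' hs a b h hn
    rcases h with h | h | h
    · exact Or.inl h
    · exact Or.inr (Or.inl h)
    · exact Or.inr (Or.inr (hs (Finset.mem_erase.2 ⟨hn, h⟩)))
  have crsymm : ∀ x y, Cr x y → Cr y x := by
    intro x y h; simp only [Cr] at *; omega
  refine ⟨insert (0, q) (S.erase (p, n + 1)), ⟨?_, ?_, ?_⟩, ?_, ?_, ?_, ?_⟩
  · intro x hx
    rcases Finset.mem_insert.1 hx with rfl | hx
    · simp only [Dg]; omega
    · exact hS.1 _ (Finset.mem_of_mem_erase hx)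
  · intro x hx y hy
    rcases Finset.mem_insert.1 hx with rfl | hx <;> rcases Finset.mem_insert.1 hy with rfl | hy
    · simp only [Cr]; omega
    · obtain ⟨y1, y2⟩ := y
      exact nc0 _ _ (Finset.mem_of_mem_erase hy) (Finset.ne_of_mem_erase hy)
    · obtain ⟨y1, y2⟩ := x
      intro h
      exact nc0 _ _ (Finset.mem_of_mem_erase hx) (Finset.ne_of_mem_erase hx) (crsymm _ _ h)
    · exact hS.2.1 _ (Finset.mem_of_mem_erase hx) _ (Finset.mem_of_mem_erase hy)
  · rintro ⟨c, d⟩ hx hy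
    have g1 := hEe _ (Finset.subset_insert (0, q) _) _ _ h1
      (by simp only [ne_eq, Prod.mk.injEq]; omega)
    have g3 := hEe _ (Finset.subset_insert (0, q) _) _ _ h3
      (by simp only [ne_eq, Prod.mk.injEq]; omega)
    have g4 := hEe _ (Finset.subset_insert (0, q) _) _ _ h4
      (by simp only [ne_eq, Prod.mk.injEq]; omega)
    have nc : ∀ a b, a < b → b ≤ n + 1 → E n (insert (0, q) (S.erase (p, n + 1))) a b →
        ¬ Cr (c, d) (a, b) := by
      intro a b hab hb h
      rcases h with h | h | h
      · simp only [Cr, Dg] at *; omega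
      · simp only [Cr, Dg] at *; omega
      · exact hy _ h
    have n1 := nc _ _ (by omega) (by omega) g1
    have n3 := nc _ _ (by omega) (by omega) g3
    have n4 := nc _ _ (by omega) (by omega) g4
    have n0 := hy _ (Finset.mem_insert_self _ _)
    by_cases hc : Cr (c, d) (p, n + 1)
    · have : (c, d) = (0, q) := by
        simp only [Prod.mk.injEq]
        simp only [Cr, Dg] at *
        omega
      rw [this]; exact Finset.mem_insert_self _ _
    · refine Finset.mem_insert_of_mem (Finset.mem_erase.2 ⟨?_, hS.2.2 _ hx ?_⟩)
      · intro h
        simp only [Prod.mk.injEq] at h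
        simp only [Cr] at n0
        omega
      · intro y hyS
        by_cases he : y = (p, n + 1)
        · rw [he]; exact hc
        · exact hy _ (Finset.mem_insert_of_mem (Finset.mem_erase.2 ⟨he, hyS⟩))
  · exact Or.inr (Or.inr (Finset.mem_insert_self _ _))
  · exact hEe _ (Finset.subset_insert (0, q) _) _ _ h4
      (by simp only [ne_eq, Prod.mk.injEq]; omega)
  · rw [Finset.card_eq_one]
    refine ⟨(p, n + 1), ?_⟩
    ext x
    simp only [Finset.mem_sdiff, Finset.mem_insert, Finset.mem_erase, Finset.mem_singleton]
    constructor
    · rintro ⟨a, b⟩; by_contra hc; exact b (Or.inr ⟨hc, a⟩)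
    · rintro rfl
      exact ⟨m1, by rintro (h | h); exacts [hne h.symm, h.1 rfl]⟩
  · rw [Finset.card_eq_one]
    refine ⟨(0, q), ?_⟩
    ext x
    simp only [Finset.mem_sdiff, Finset.mem_insert, Finset.mem_erase, Finset.mem_singleton]
    constructor
    · rintro ⟨a | a, b⟩
      · exact a
      · exact absurd a.2 b
    · rintro rfl
      exact ⟨Or.inl rfl, m2'⟩

lemma boundary_iff {n p q : ℕ} (hp : 1 ≤ p) (hpq : p < q) (hqn : q ≤ n) (t : Triangulation n) :
    t ∈ boundarySet n p q ↔ E n (N t.val) 0 p ∧ E n (N t.val) p (n + 1) ∧ E n (N t.val) p q ∧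
      E n (N t.val) q (n + 1) := by
  unfold boundarySet
  rw [Set.mem_setOf_eq, class_iff t hp (by omega)]
  constructor
  · rintro ⟨⟨h1, h2⟩, t', ht', hadj⟩
    rw [class_iff t' (by omega) hqn] at ht'
    rw [adj_iff] at hadj
    exact ⟨h1, h2, part1_fwd hp hpq hqn (NT_N t) (NT_N t') h1 h2 ht'.1 ht'.2 hadj.1 hadj.2⟩
  · rintro ⟨h1, h2, h3, h4⟩
    obtain ⟨S', a, b, c, d, e⟩ := part1_bwd hp hpq hqn (NT_N t) h1 h2 h3 h4
    refine ⟨⟨h1, h2⟩, mkTri S' a, ?_, ?_⟩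
    · rw [class_iff _ (by omega) hqn, N_mkTri]; exact ⟨b, c⟩
    · rw [adj_iff, N_mkTri]; exact ⟨d, e⟩

/-! ### Part two -/

def shift (lo : ℕ) (x : ℕ × ℕ) : ℕ × ℕ := (x.1 + lo, x.2 + lo)

lemma shift_inj (lo : ℕ) : Function.Injective (shift lo) := by
  rintro ⟨a, b⟩ ⟨c, d⟩ h
  simp only [shift, Prod.mk.injEq] at *
  omega

open Classical in
noncomputable def restr (lo k : ℕ) (S : Finset (ℕ × ℕ)) : Finset (ℕ × ℕ) :=
  (Finset.range (k + 2) ×ˢ Finset.range (k + 2)).filter (fun x => Dg k x ∧ shift lo x ∈ S)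

lemma mem_restr {lo k : ℕ} {S : Finset (ℕ × ℕ)} {x : ℕ × ℕ} :
    x ∈ restr lo k S ↔ Dg k x ∧ shift lo x ∈ S := by
  classical
  unfold restr
  refine Finset.mem_filter.trans ?_
  refine ⟨fun h => h.2, fun h => ⟨?_, h⟩⟩
  have := h.1
  simp only [Dg] at this
  simp only [Finset.mem_product, Finset.mem_range]
  omega

lemma restr_NT {n lo k : ℕ} {S : Finset (ℕ × ℕ)} (hS : NT n S) (hle : lo + k ≤ n)
    (hE : E n S lo (lo + k + 1)) : NT k (restr lo k S) := by
  refine ⟨fun x hx => (mem_restr.1 hx).1, ?_, ?_⟩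
  · intro x hx y hy h
    refine hS.2.1 _ (mem_restr.1 hx).2 _ (mem_restr.1 hy).2 ?_
    simp only [Cr, shift] at *
    omega
  · rintro ⟨a, b⟩ hx h
    refine mem_restr.2 ⟨hx, hS.2.2 _ ?_ ?_⟩
    · simp only [Dg, shift] at *; omega
    · rintro ⟨c, d⟩ hcd hcr
      have h1 := hE.nc hS hcd
      have h2 := hS.1 _ hcd
      have h3 : (c - lo, d - lo) ∈ restr lo k S := by
        refine mem_restr.2 ⟨?_, ?_⟩
        · simp only [Dg, shift, Cr] at *; omega
        · have : shift lo (c - lo, d - lo) = (c, d) := by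
            simp only [Dg, shift, Cr, Prod.mk.injEq] at *; omega
          rw [this]; exact hcd
      refine h _ h3 ?_
      simp only [Dg, shift, Cr] at *; omega

lemma E_restr {n lo k a b : ℕ} {S : Finset (ℕ × ℕ)} (hle : lo + k ≤ n)
    (hab : a < b) (hb : b ≤ k + 1) (hne : ¬ (a = 0 ∧ b = k + 1)) :
    E n S (a + lo) (b + lo) ↔ E k (restr lo k S) a b := by
  unfold E
  rw [mem_restr]
  constructor
  · rintro (h | h | h)
    · exact Or.inl (by omega)
    · omega
    · by_cases hh : b = a + 1
      · exact Or.inl hh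
      · refine Or.inr (Or.inr ⟨?_, h⟩)
        simp only [Dg]; omega
  · rintro (h | h | h)
    · exact Or.inl (by omega)
    · omega
    · exact Or.inr (Or.inr h.2)

lemma decomp {n p : ℕ} (hp : 1 ≤ p) (hpn : p < n) {S : Finset (ℕ × ℕ)} (hS : NT n S)
    (h1 : E n S 0 p) (h2 : E n S p (n + 1)) (x : ℕ × ℕ) :
    x ∈ S ↔ x ∈ restr 0 (p - 1) S ∨ (∃ y ∈ restr p (n - p) S, shift p y = x) ∨
      (x = (0, p) ∧ 2 ≤ p) ∨ x = (p, n + 1) := by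
  obtain ⟨a, b⟩ := x
  constructor
  · intro h
    have n1 := h1.nc hS h
    have n2 := h2.nc hS h
    have hd := hS.1 _ h
    by_cases e1 : (a, b) = (0, p)
    · refine Or.inr (Or.inr (Or.inl ⟨e1, ?_⟩))
      simp only [Prod.mk.injEq, Dg] at *; omega
    by_cases e2 : (a, b) = (p, n + 1)
    · exact Or.inr (Or.inr (Or.inr e2))
    by_cases hb : b ≤ p
    · refine Or.inl (mem_restr.2 ⟨?_, h⟩)
      simp only [Prod.mk.injEq, Dg] at *; omega
    · refine Or.inr (Or.inl ⟨(a - p, b - p), ?_, ?_⟩)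
      · have : shift p (a - p, b - p) = (a, b) := by
          simp only [shift, Prod.mk.injEq, Dg, Cr] at *; omega
        refine mem_restr.2 ⟨?_, this ▸ h⟩
        simp only [Prod.mk.injEq, Dg, Cr] at *; omega
      · simp only [shift, Prod.mk.injEq, Dg, Cr] at *; omega
  · rintro (h | ⟨y, hy, h⟩ | ⟨h, hh⟩ | h)
    · exact (mem_restr.1 h).2
    · rw [← h]; exact (mem_restr.1 hy).2
    · rw [h]; exact h1.mem (by simp only [Dg]; omega)
    · rw [h]; exact h2.mem (by simp only [Dg]; omega)

lemma sdiff_card {n p : ℕ} (hp : 1 ≤ p) (hpn : p < n) {S S' : Finset (ℕ × ℕ)}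
    (hS : NT n S) (hS' : NT n S')
    (h1 : E n S 0 p) (h2 : E n S p (n + 1)) (h1' : E n S' 0 p) (h2' : E n S' p (n + 1)) :
    (S \ S').card = (restr 0 (p - 1) S \ restr 0 (p - 1) S').card +
      (restr p (n - p) S \ restr p (n - p) S').card := by
  have key : S \ S' = (restr 0 (p - 1) S \ restr 0 (p - 1) S') ∪
      (restr p (n - p) S \ restr p (n - p) S').image (shift p) := by
    ext x
    simp only [Finset.mem_sdiff, Finset.mem_union, Finset.mem_image]
    constructor
    · rintro ⟨hx, hx'⟩
      rw [decomp hp hpn hS' h1' h2'] at hx'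
      rw [decomp hp hpn hS h1 h2] at hx
      rcases hx with h | ⟨y, hy, h⟩ | h | h
      · exact Or.inl ⟨h, fun hc => hx' (Or.inl hc)⟩
      · exact Or.inr ⟨y, ⟨hy, fun hc => hx' (Or.inr (Or.inl ⟨y, hc, h⟩))⟩, h⟩
      · exact absurd (Or.inr (Or.inr (Or.inl h))) hx'
      · exact absurd (Or.inr (Or.inr (Or.inr h))) hx'
    · rintro (⟨h, h'⟩ | ⟨y, ⟨h, h'⟩, rfl⟩)
      · rw [mem_restr] at h h'
        exact ⟨h.2, fun hc => h' ⟨h.1, hc⟩⟩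
      · rw [mem_restr] at h h'
        exact ⟨h.2, fun hc => h' ⟨h.1, hc⟩⟩
  rw [key, Finset.card_union_of_disjoint, Finset.card_image_of_injective _ (shift_inj p)]
  rw [Finset.disjoint_left]
  intro x hx hx'
  obtain ⟨y, hy, rfl⟩ := Finset.mem_image.1 hx'
  have a := (mem_restr.1 (Finset.mem_sdiff.1 hx).1).1
  have b := (mem_restr.1 (Finset.mem_sdiff.1 hy).1).1
  simp only [Dg, shift] at *
  omega

open Classical in
noncomputable def glue (n p : ℕ) (A B : Finset (ℕ × ℕ)) : Finset (ℕ × ℕ) :=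
  A ∪ B.image (shift p) ∪ (if 2 ≤ p then {(0, p)} else ∅) ∪ {(p, n + 1)}

lemma mem_glue {n p : ℕ} {A B : Finset (ℕ × ℕ)} {x : ℕ × ℕ} :
    x ∈ glue n p A B ↔ x ∈ A ∨ (∃ y ∈ B, shift p y = x) ∨ (x = (0, p) ∧ 2 ≤ p) ∨
      x = (p, n + 1) := by
  unfold glue
  by_cases h : 2 ≤ p
  · simp only [h, if_true, if_false, Finset.mem_union, Finset.mem_image, Finset.mem_singleton,
      Finset.notMem_empty, and_true, and_false, or_false, false_or, or_assoc]
  · simp only [h, if_true, if_false, Finset.mem_union, Finset.mem_image, Finset.mem_singleton,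
      Finset.notMem_empty, and_true, and_false, or_false, false_or, or_assoc]

lemma glue_NT {n p : ℕ} (hp : 1 ≤ p) (hpn : p < n) {A B : Finset (ℕ × ℕ)}
    (hA : NT (p - 1) A) (hB : NT (n - p) B) : NT n (glue n p A B) := by
  refine ⟨?_, ?_, ?_⟩
  · intro x hx
    rcases mem_glue.1 hx with h | ⟨y, hy, rfl⟩ | ⟨rfl, h⟩ | rfl
    · have := hA.1 _ h
      simp only [Dg] at *; omega
    · have := hB.1 _ hy
      simp only [Dg, shift] at *; omega
    · simp only [Dg]; omega
    · simp only [Dg]; omega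
  · intro x hx y hy
    rcases mem_glue.1 hx with h | ⟨x', hx', rfl⟩ | ⟨rfl, h⟩ | rfl <;>
    rcases mem_glue.1 hy with g | ⟨y', hy', rfl⟩ | ⟨rfl, g⟩ | rfl
    · exact hA.2.1 _ h _ g
    · have a := hA.1 _ h
      have b := hB.1 _ hy'
      simp only [Dg, Cr, shift] at *; omega
    · have a := hA.1 _ h
      simp only [Dg, Cr, shift] at *; omega
    · have a := hA.1 _ h
      simp only [Dg, Cr, shift] at *; omega
    · have a := hA.1 _ g
      have b := hB.1 _ hx'
      simp only [Dg, Cr, shift] at *; omega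
    · have := hB.2.1 _ hx' _ hy'
      simp only [Cr, shift] at *; omega
    · have b := hB.1 _ hx'
      simp only [Dg, Cr, shift] at *; omega
    · have b := hB.1 _ hx'
      simp only [Dg, Cr, shift] at *; omega
    · have a := hA.1 _ g
      simp only [Dg, Cr, shift] at *; omega
    · have b := hB.1 _ hy'
      simp only [Dg, Cr, shift] at *; omega
    · simp only [Cr]; omega
    · simp only [Cr]; omega
    · have a := hA.1 _ g
      simp only [Dg, Cr, shift] at *; omega
    · have b := hB.1 _ hy'
      simp only [Dg, Cr, shift] at *; omega
    · simp only [Cr]; omega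
    · simp only [Cr]; omega
  · rintro ⟨c, d⟩ hd h
    have n1 := h _ (mem_glue.2 (Or.inr (Or.inr (Or.inr rfl))))
    have n2 : 2 ≤ p → ¬ Cr (c, d) (0, p) :=
      fun hh => h _ (mem_glue.2 (Or.inr (Or.inr (Or.inl ⟨rfl, hh⟩))))
    rw [mem_glue]
    by_cases e1 : (c, d) = (0, p)
    · refine Or.inr (Or.inr (Or.inl ⟨e1, ?_⟩))
      simp only [Prod.mk.injEq, Dg] at *; omega
    by_cases e2 : (c, d) = (p, n + 1)
    · exact Or.inr (Or.inr (Or.inr e2))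
    by_cases hb : d ≤ p
    · refine Or.inl (hA.2.2 _ ?_ fun y hy => h _ (mem_glue.2 (Or.inl hy)))
      simp only [Prod.mk.injEq, Dg] at *; omega
    · have hcp : p ≤ c := by
        by_cases h2 : 2 ≤ p
        · have := n2 h2
          simp only [Prod.mk.injEq, Dg, Cr] at *; omega
        · simp only [Prod.mk.injEq, Dg, Cr] at *; omega
      refine Or.inr (Or.inl ⟨(c - p, d - p), hB.2.2 _ ?_ ?_, ?_⟩)
      · simp only [Prod.mk.injEq, Dg] at *; omega
      · intro y hy hc
        refine h _ (mem_glue.2 (Or.inr (Or.inl ⟨y, hy, rfl⟩))) ?_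
        simp only [Cr, shift] at *; omega
      · simp only [shift, Prod.mk.injEq]; omega

lemma restr_glue_left {n p : ℕ} (hp : 1 ≤ p) {A B : Finset (ℕ × ℕ)}
    (hA : NT (p - 1) A) (hB : NT (n - p) B) : restr 0 (p - 1) (glue n p A B) = A := by
  ext ⟨a, b⟩
  rw [mem_restr, mem_glue]
  constructor
  · rintro ⟨hd, h | ⟨y, hy, h⟩ | ⟨h, h'⟩ | h⟩
    · exact h
    · have := hB.1 _ hy
      simp only [Dg, shift, Prod.mk.injEq] at *; omega
    · simp only [Dg, shift, Prod.mk.injEq] at *; omega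
    · simp only [Dg, shift, Prod.mk.injEq] at *; omega
  · intro h
    exact ⟨hA.1 _ h, Or.inl h⟩

lemma restr_glue_right {n p : ℕ} (hp : 1 ≤ p) (hpn : p < n) {A B : Finset (ℕ × ℕ)}
    (hA : NT (p - 1) A) (hB : NT (n - p) B) : restr p (n - p) (glue n p A B) = B := by
  ext ⟨a, b⟩
  rw [mem_restr, mem_glue]
  constructor
  · rintro ⟨hd, h | ⟨y, hy, h⟩ | ⟨h, h'⟩ | h⟩
    · have := hA.1 _ h
      simp only [Dg, shift] at *; omega
    · rwa [← shift_inj p h]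
    · simp only [Dg, shift, Prod.mk.injEq] at *; omega
    · simp only [Dg, shift, Prod.mk.injEq] at *; omega
  · intro h
    exact ⟨hB.1 _ h, Or.inr (Or.inl ⟨_, h, rfl⟩)⟩

lemma NT_eq_of_subset {n : ℕ} {S S' : Finset (ℕ × ℕ)} (hS : NT n S) (hS' : NT n S')
    (h : (S \ S').card = 0) : S = S' := by
  have hsub : S ⊆ S' := by
    rw [Finset.card_eq_zero, Finset.sdiff_eq_empty_iff_subset] at h
    exact h
  refine Finset.Subset.antisymm hsub fun x hx => hS.2.2 x (hS'.1 x hx) fun y hy => ?_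
  exact hS'.2.1 x hx y (hsub hy)

lemma sides_left {n p : ℕ} (hp : 1 ≤ p) {S : Finset (ℕ × ℕ)} (h : E n S 0 p) :
    E n S 0 (0 + (p - 1) + 1) := by
  have : 0 + (p - 1) + 1 = p := by omega
  rwa [this]

lemma sides_right {n p : ℕ} (hpn : p < n) {S : Finset (ℕ × ℕ)} (h : E n S p (n + 1)) :
    E n S p (p + (n - p) + 1) := by
  have : p + (n - p) + 1 = n + 1 := by omega
  rwa [this]

lemma class_restr {n p q : ℕ} (hpq : p < q) (hqn : q ≤ n)
    {S : Finset (ℕ × ℕ)} :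
    (E n S p q ∧ E n S q (n + 1)) ↔ E (n - p) (restr p (n - p) S) 0 (q - p) ∧
      E (n - p) (restr p (n - p) S) (q - p) (n - p + 1) := by
  rw [← E_restr (n := n) (by omega) (by omega) (by omega) (by omega),
    ← E_restr (n := n) (by omega) (by omega) (by omega) (by omega)]
  have e1 : 0 + p = p := by omega
  have e2 : q - p + p = q := by omega
  have e3 : n - p + 1 + p = n + 1 := by omega
  rw [e1, e2, e3]

/-- The restriction map. -/
noncomputable def toProd {n p q : ℕ} (hp : 1 ≤ p) (hpq : p < q) (hqn : q ≤ n)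
    (t : boundarySet n p q) :
    Triangulation (p - 1) × (orientedClass (n - p) (q - p)) :=
  have h := (boundary_iff hp hpq hqn t.1).1 t.2
  (mkTri _ (restr_NT (NT_N t.1) (by omega) (sides_left hp h.1)),
    ⟨mkTri _ (restr_NT (NT_N t.1) (by omega) (sides_right (by omega) h.2.1)), by
      rw [class_iff _ (by omega) (by omega), N_mkTri]
      exact (class_restr hpq hqn).1 h.2.2⟩)

lemma toProd_fst {n p q : ℕ} (hp : 1 ≤ p) (hpq : p < q) (hqn : q ≤ n)
    (t : boundarySet n p q) :
    N (toProd hp hpq hqn t).1.val = restr 0 (p - 1) (N t.1.val) := by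
  simp only [toProd, N_mkTri]

lemma toProd_snd {n p q : ℕ} (hp : 1 ≤ p) (hpq : p < q) (hqn : q ≤ n)
    (t : boundarySet n p q) :
    N (toProd hp hpq hqn t).2.1.val = restr p (n - p) (N t.1.val) := by
  simp only [toProd, N_mkTri]

lemma toProd_bij {n p q : ℕ} (hp : 1 ≤ p) (hpq : p < q) (hqn : q ≤ n) :
    Function.Bijective (toProd hp hpq hqn) := by
  constructor
  · intro s t hst
    have h1 := toProd_fst hp hpq hqn s
    have h2 := toProd_snd hp hpq hqn s
    rw [hst, toProd_fst] at h1
    rw [hst, toProd_snd] at h2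
    have hs := (boundary_iff hp hpq hqn s.1).1 s.2
    have ht := (boundary_iff hp hpq hqn t.1).1 t.2
    apply Subtype.ext
    apply tri_ext
    ext x
    rw [decomp hp (by omega) (NT_N s.1) hs.1 hs.2.1, decomp hp (by omega) (NT_N t.1) ht.1 ht.2.1,
      h1, h2]
  · rintro ⟨a, b, hb⟩
    have hA := NT_N a
    have hB := NT_N b
    have hG := glue_NT hp (by omega : p < n) hA hB
    have hL := restr_glue_left hp hA hB
    have hR := restr_glue_right hp (by omega : p < n) hA hB
    rw [class_iff _ (by omega) (by omega)] at hb
    have hmem : mkTri _ hG ∈ boundarySet n p q := by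
      rw [boundary_iff hp hpq hqn, N_mkTri, class_restr hpq hqn, hR]
      refine ⟨?_, ?_, hb⟩
      · by_cases h2 : 2 ≤ p
        · exact Or.inr (Or.inr (mem_glue.2 (Or.inr (Or.inr (Or.inl ⟨rfl, h2⟩)))))
        · exact Or.inl (by omega)
      · exact Or.inr (Or.inr (mem_glue.2 (Or.inr (Or.inr (Or.inr rfl)))))
    refine ⟨⟨_, hmem⟩, ?_⟩
    refine Prod.ext ?_ (Subtype.ext ?_)
    · apply tri_ext
      rw [toProd_fst, N_mkTri, hL]
    · apply tri_ext
      rw [toProd_snd, N_mkTri, hR]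

lemma toProd_adj {n p q : ℕ} (hp : 1 ≤ p) (hpq : p < q) (hqn : q ≤ n)
    (s t : boundarySet n p q) :
    ((assocGraph (p - 1)).boxProd
        ((assocGraph (n - p)).induce (orientedClass (n - p) (q - p)))).Adj
      (toProd hp hpq hqn s) (toProd hp hpq hqn t) ↔
    ((assocGraph n).induce (boundarySet n p q)).Adj s t := by
  have hs := (boundary_iff hp hpq hqn s.1).1 s.2
  have ht := (boundary_iff hp hpq hqn t.1).1 t.2
  rw [SimpleGraph.boxProd_adj, SimpleGraph.induce_adj, SimpleGraph.induce_adj,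
    adj_iff, adj_iff, adj_iff,
    sdiff_card hp (by omega) (NT_N s.1) (NT_N t.1) hs.1 hs.2.1 ht.1 ht.2.1,
    sdiff_card hp (by omega) (NT_N t.1) (NT_N s.1) ht.1 ht.2.1 hs.1 hs.2.1]
  simp only [← toProd_fst hp hpq hqn, ← toProd_snd hp hpq hqn]
  generalize toProd hp hpq hqn s = u
  generalize toProd hp hpq hqn t = v
  obtain ⟨u1, u2⟩ := u
  obtain ⟨v1, v2⟩ := v
  simp only
  constructor
  · rintro (⟨⟨h1, h2⟩, rfl⟩ | ⟨⟨h1, h2⟩, rfl⟩)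
    · simp [h1, h2]
    · simp [h1, h2]
  · rintro ⟨h1, h2⟩
    rcases Nat.eq_zero_or_pos (N u1.val \ N v1.val).card with h | h
    · have e := tri_ext (NT_eq_of_subset (NT_N u1) (NT_N v1) h)
      subst e
      simp only [sdiff_self, Finset.bot_eq_empty, Finset.card_empty, zero_add] at h1 h2
      exact Or.inr ⟨⟨h1, h2⟩, rfl⟩
    · have h' : (N u2.1.val \ N v2.1.val).card = 0 := by omega
      have e := Subtype.ext (tri_ext (NT_eq_of_subset (NT_N u2.1) (NT_N v2.1) h'))
      subst e
      simp only [sdiff_self, Finset.bot_eq_empty, Finset.card_empty, add_zero] at h1 h2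
      exact Or.inl ⟨⟨h1, h2⟩, rfl⟩

end AssocAux

/-- for every `n ≥ 2` and `1 ≤ p < q ≤ n`, the boundary set `∂_{p,q}` is
exactly the set of triangulations in `Θ_{T_p}` containing the triangle `{p, q, n+1}`,
and the subgraph of `K_n` induced by `∂_{p,q}` is isomorphic to `K_{p-1} □ Θ'`, where
`Θ'` is the oriented class of the triangle `{0, q-p, (n-p)+1}` inside the flip graph
`K_{n-p}` of the convex `(n-p+2)`-gon (the relabeling of the polygon on vertices
`p, …, n+1` with special side `{p, n+1}`), viewed as the induced subgraph on that
class. -/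
theorem boundarySet_eq_and_isomorphic (n p q : ℕ) (hn : 2 ≤ n) (hp : 1 ≤ p)
    (hpq : p < q) (hqn : q ≤ n) :
    boundarySet n p q =
      {t : Triangulation n | t ∈ orientedClass n p ∧
        IsTriangleOf t ((p : ℕ) : Fin (n + 2)) ((q : ℕ) : Fin (n + 2))
          (((n + 1 : ℕ)) : Fin (n + 2))} ∧
    Nonempty (((assocGraph n).induce (boundarySet n p q)) ≃g
      (assocGraph (p - 1)).boxProd
        ((assocGraph (n - p)).induce (orientedClass (n - p) (q - p)))) := by
  refine ⟨?_, ⟨⟨Equiv.ofBijective _ (AssocAux.toProd_bij hp hpq hqn), ?_⟩⟩⟩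
  · ext t
    rw [AssocAux.boundary_iff hp hpq hqn]
    rw [Set.mem_setOf_eq, AssocAux.class_iff t hp (by omega),
      AssocAux.triangle_iff t p q (n + 1) hpq (by omega) le_rfl]
    tauto
  · intro s t
    exact AssocAux.toProd_adj hp hpq hqn s t
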